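/- Poincaré–Friedrichs with boundary term: Let 𝒯_h be a shape-regular triangulation of a bounded polygon Ω with shape regularity constant 𝒦. There is a constant C depending only on Ω and 𝒦 such that for every u ∈ H¹_h, ‖u‖²_{L²(Ω)} ≤ C (∫_{Ω_h}|∇u|² + Σ_{e∈ℰ⁰_h}|e|⁻¹∫_e[u]² + ∫_{∂Ω}u²). -/

import Mathlib

open MeasureTheory Set
open scoped Classical

noncomputable section

abbrev Pt : Type := EuclideanSpace ℝ (Fin 2)

structure Tri where
  A : Pt
  B : Pt
  C : Pt

namespace Tri

def cross (t : Tri) : ℝ :=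
  (t.B 0 - t.A 0) * (t.C 1 - t.A 1) - (t.B 1 - t.A 1) * (t.C 0 - t.A 0)

/-- Non-degeneracy (the three vertices are not collinear). -/
def Nondeg (t : Tri) : Prop := t.cross ≠ 0

def area (t : Tri) : ℝ := |t.cross| / 2

def la (t : Tri) : ℝ := dist t.B t.C
def lb (t : Tri) : ℝ := dist t.A t.C
def lc (t : Tri) : ℝ := dist t.A t.B

/-- Inradius of a triangle: `r = 2·Area/(a+b+c)`. -/
def inradius (t : Tri) : ℝ := 2 * t.area / (t.la + t.lb + t.lc)

/-- Circumradius of a triangle: `R = abc/(4·Area)`. -/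
def circumradius (t : Tri) : ℝ := t.la * t.lb * t.lc / (4 * t.area)

/-- Shape regularity constant `R/r` of a triangle. -/
def shapeReg (t : Tri) : ℝ := t.circumradius / t.inradius

def closedHull (t : Tri) : Set Pt := convexHull ℝ {t.A, t.B, t.C}

def openHull (t : Tri) : Set Pt := interior t.closedHull

def edgeList (t : Tri) : List (Pt × Pt) := [(t.A, t.B), (t.B, t.C), (t.C, t.A)]

end Tri

/-- Two (oriented) edges coincide as unoriented segments. -/
def SameEdge (e e' : Pt × Pt) : Prop := e' = e ∨ e' = (e.2, e.1)

/-- Arclength integral of `f` over the straight segment from `p` to `q`. -/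
def segInt (p q : Pt) (f : Pt → ℝ) : ℝ :=
  dist p q * ∫ s in (0:ℝ)..1, f (p + s • (q - p))

/-- A bounded polygonal domain in the plane. -/
def IsPolygon (Ω : Set Pt) : Prop :=
  Ω.Nonempty ∧ Bornology.IsBounded Ω ∧
    ∃ S : Finset Tri, (∀ t ∈ S, t.Nondeg) ∧ Ω = interior (⋃ t ∈ S, t.closedHull)

/-- A (conforming) triangulation of the polygonal domain `Ω`. -/
structure Triangulation (Ω : Set Pt) where
  tris : Finset Tri
  nondeg : ∀ t ∈ tris, t.Nondeg
  cover : Ω = interior (⋃ t ∈ tris, t.closedHull)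
  disj : ∀ t ∈ tris, ∀ t' ∈ tris, t ≠ t' → t.openHull ∩ t'.openHull = ∅
  conforming : ∀ t ∈ tris, ∀ e ∈ t.edgeList,
      segment ℝ e.1 e.2 ⊆ frontier Ω ∨
      ∃ t' ∈ tris, t' ≠ t ∧ ∃ e' ∈ t'.edgeList, SameEdge e e'

namespace Triangulation

variable {Ω : Set Pt}

/-- All triangles have shape regularity constant at most `K`. -/
def ShapeRegular (T : Triangulation Ω) (K : ℝ) : Prop :=
  ∀ t ∈ T.tris, t.shapeReg ≤ K

/-- `‖u‖²_{L²(Ω)}` of a piecewise function. -/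
def sqL2 (T : Triangulation Ω) (u : Tri → Pt → ℝ) : ℝ :=
  ∑ t ∈ T.tris, ∫ x in t.openHull, (u t x) ^ 2

/-- `∫_{Ω_h} |∇u|²` of a piecewise function. -/
def gradSq (T : Triangulation Ω) (u : Tri → Pt → ℝ) : ℝ :=
  ∑ t ∈ T.tris, ∫ x in t.openHull, ‖fderiv ℝ (u t) x‖ ^ 2

/-- Contribution `Σ_{e shared by t₁,t₂} |e|⁻¹ ∫_e [u]²` of the common edges of `t₁, t₂`. -/
def edgeJump (u : Tri → Pt → ℝ) (t₁ t₂ : Tri) : ℝ :=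
  ((t₁.edgeList.map fun e =>
    if ∃ e' ∈ t₂.edgeList, SameEdge e e' then
      (dist e.1 e.2)⁻¹ * segInt e.1 e.2 (fun x => (u t₁ x - u t₂ x) ^ 2)
    else 0)).sum

/-- `Σ_{e ∈ ℰ⁰_h} |e|⁻¹ ∫_e [u]²` (each interior edge counted once, whence the `1/2`). -/
def jumpSq (T : Triangulation Ω) (u : Tri → Pt → ℝ) : ℝ :=
  (1/2) * ∑ t₁ ∈ T.tris, ∑ t₂ ∈ T.tris, if t₁ ≠ t₂ then edgeJump u t₁ t₂ else 0

/-- The squared `H¹_h` norm. -/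
def normSq (T : Triangulation Ω) (u : Tri → Pt → ℝ) : ℝ :=
  T.sqL2 u + T.gradSq u + T.jumpSq u

/-- `∫_{∂Ω} u²` via the traces from the triangles having a boundary edge. -/
def bdrySq (T : Triangulation Ω) (u : Tri → Pt → ℝ) : ℝ :=
  ∑ t ∈ T.tris, ((t.edgeList.map fun e =>
    if segment ℝ e.1 e.2 ⊆ frontier Ω then segInt e.1 e.2 (fun x => (u t x) ^ 2) else 0)).sum

/-- `u` is a piecewise `H¹` function subordinate to the triangulation. -/
def PwH1 (T : Triangulation Ω) (u : Tri → Pt → ℝ) : Prop :=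
  ∀ t ∈ T.tris, ContinuousOn (u t) t.closedHull ∧ DifferentiableOn ℝ (u t) t.openHull ∧
    IntegrableOn (fun x => (u t x) ^ 2) t.openHull ∧
    IntegrableOn (fun x => ‖fderiv ℝ (u t) x‖ ^ 2) t.openHull

/-- `v : ℝ² → ℝ` is the extension by zero of the piecewise function `u`. -/
def Glues (T : Triangulation Ω) (u : Tri → Pt → ℝ) (v : Pt → ℝ) : Prop :=
  (∀ t ∈ T.tris, ∀ x ∈ t.openHull, v x = u t x) ∧ ∀ x, x ∉ Ω → v x = 0

end Triangulation

/-!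
Let `Ω` lie in the disc of radius `M` about `c`. The divergence of `v² (x - c)` is
`2 v² + 2 v ∇v · (x - c)`, so on a triangle `t` Young's inequality controls `∫_t v²` by `∫_t |∇v|²`
and the fluxes of `v² (x - c)` through the sides of `t`. The normal component of `x - c` is constant
on each side, and the two triangles sharing an interior edge see opposite values of it; after
summation only the boundary sides and the differences of the two traces of `u²` on the interior
edges survive. Such a difference is at most a small multiple of the traces themselves plus a large
multiple of the squared jump.

With a vertex of `t` in place of `c`, only the flux through the opposite side `e` is left, and the
divergence identity reads `∫_t (2 v² + 2 v ∇v · (x - c)) = 2 |t| |e|⁻¹ ∫_e v²`: this is the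
fundamental theorem of calculus along the rays from the vertex. Shape regularity bounds `|e|²` by a
multiple of `|t|`, so the identity bounds `|e| ∫_e v²` and the traces can be absorbed. Since `x - c`
is a barycentric combination of the fields `x - vertex`, the three vertex identities also imply the
divergence theorem for arbitrary `c`.
-/

/-! ### Oriented areas and fluxes -/

/-- The planar determinant `x₀ y₁ - x₁ y₀`. -/
def wedge (x y : Pt) : ℝ := x 0 * y 1 - x 1 * y 0

lemma abs_wedge_le (x y : Pt) : |wedge x y| ≤ ‖x‖ * ‖y‖ := by
  refine abs_le_of_sq_le_sq ?_ (by positivity)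
  simp only [mul_pow, EuclideanSpace.norm_sq_eq, Fin.sum_univ_two, Real.norm_eq_abs, sq_abs, wedge]
  nlinarith [sq_nonneg (x 0 * y 0 + x 1 * y 1)]

/-- Twice the signed area of the triangle `PQR`. -/
def orient (P Q R : Pt) : ℝ := wedge (Q - P) (R - P)

section Orient

variable (P Q R X : Pt)

lemma orient_rotate : orient Q R P = orient P Q R := by
  simp only [orient, wedge, PiLp.sub_apply]; ring

lemma orient_swap : orient P R Q = -orient P Q R := by
  simp only [orient, wedge, PiLp.sub_apply]; ring

lemma orient_self_right : orient P Q Q = 0 := by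
  simp only [orient, wedge, PiLp.sub_apply]; ring

lemma abs_orient_le : |orient P Q R| ≤ dist P Q * dist P R := by
  simpa only [orient, dist_eq_norm, norm_sub_rev P] using abs_wedge_le (Q - P) (R - P)

lemma orient_add_orient_add_orient :
    orient X Q R + orient P X R + orient P Q X = orient P Q R := by
  simp only [orient, wedge, PiLp.sub_apply]; ring

/-- Cramer's rule for barycentric coordinates. -/
lemma orient_smul_eq :
    orient P Q R • X = orient X Q R • P + orient P X R • Q + orient P Q X • R := by
  ext i
  fin_cases i <;>
    simp only [orient, wedge, PiLp.add_apply, PiLp.sub_apply, PiLp.smul_apply, smul_eq_mul,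
      Fin.zero_eta, Fin.mk_one] <;>
    ring

variable {P Q R}

lemma affineIndependent_of_orient_ne_zero (h : orient P Q R ≠ 0) :
    AffineIndependent ℝ ![P, Q, R] := by
  rw [affineIndependent_iff_not_collinear_set,
    collinear_iff_of_mem (p₀ := P) (mem_insert P {Q, R})]
  rintro ⟨v, hv⟩
  obtain ⟨q, hq⟩ := hv Q (by simp)
  obtain ⟨r, hr⟩ := hv R (by simp)
  refine h ?_
  simp only [hq, hr, orient, wedge, vadd_eq_add, add_sub_cancel_right, PiLp.smul_apply, smul_eq_mul]
  ring

end Orient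

lemma mem_interior_convexHull_range_iff {ι E : Type*} [Fintype ι] [NormedAddCommGroup E]
    [NormedSpace ℝ E] (b : AffineBasis ι ℝ E) {x : E} :
    x ∈ interior (convexHull ℝ (range b)) ↔
      ∃ w : ι → ℝ, (∀ i, 0 < w i) ∧ ∑ i, w i = 1 ∧ ∑ i, w i • b i = x := by
  rw [b.interior_convexHull, mem_ofPred_eq]
  constructor
  · exact fun h => ⟨fun i => b.coord i x, h, b.sum_coord_apply_eq_one x,
      b.linear_combination_coord_eq_self x⟩
  · rintro ⟨w, hpos, hsum, rfl⟩ i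
    rw [← Finset.affineCombination_eq_linear_combination _ _ _ hsum,
      b.coord_apply_combination_of_mem (Finset.mem_univ i) hsum]
    exact hpos i

lemma mem_interior_convexHull_triple_iff {P Q R x : Pt} (h : orient P Q R ≠ 0) :
    x ∈ interior (convexHull ℝ {P, Q, R}) ↔
      ∃ a b c : ℝ, 0 < a ∧ 0 < b ∧ 0 < c ∧ a + b + c = 1 ∧ a • P + b • Q + c • R = x := by
  have hind := affineIndependent_of_orient_ne_zero h
  have htop : affineSpan ℝ (range ![P, Q, R]) = ⊤ := by
    rw [hind.affineSpan_eq_top_iff_card_eq_finrank_add_one]; simp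
  have hrange : ({P, Q, R} : Set Pt) = range ![P, Q, R] := by
    simp only [Matrix.range_cons, Matrix.range_empty, union_empty, singleton_union]
  rw [hrange]
  refine (mem_interior_convexHull_range_iff ⟨![P, Q, R], hind, htop⟩).trans ⟨?_, ?_⟩
  · rintro ⟨w, hpos, hsum, hx⟩
    exact ⟨w 0, w 1, w 2, hpos 0, hpos 1, hpos 2, (Fin.sum_univ_three _).symm.trans hsum,
      (Fin.sum_univ_three _).symm.trans hx⟩
  · rintro ⟨a, b, c, ha, hb, hc, hsum, hx⟩
    refine ⟨![a, b, c], ?_, (Fin.sum_univ_three _).trans hsum,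
      (Fin.sum_univ_three _).trans hx⟩
    intro i
    fin_cases i <;> assumption

/-- The flux of the vector field `x ↦ x - c` through the side `QR` of the triangle `PQR`, in the
direction pointing out of the triangle. -/
def flux (c P Q R : Pt) : ℝ := (SignType.sign (orient P Q R) : ℝ) * orient c Q R

section Flux

variable {P P' Q R : Pt}

lemma flux_swap (c P Q R : Pt) : flux c P R Q = flux c P Q R := by
  simp [flux, orient_swap _ Q R, Left.sign_neg]

lemma flux_self (P Q R : Pt) : flux P P Q R = |orient P Q R| := sign_mul_self _

lemma abs_flux_le (c P Q R : Pt) : |flux c P Q R| ≤ dist c Q * dist Q R := by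
  have hsign : |(SignType.sign (orient P Q R) : ℝ)| ≤ 1 := by
    cases SignType.sign (orient P Q R) <;> simp
  calc |flux c P Q R| ≤ 1 * |orient Q R c| := by
        rw [flux, abs_mul, ← orient_rotate c]; gcongr
    _ ≤ dist c Q * dist Q R := by
        rw [one_mul, mul_comm, dist_comm c]; exact abs_orient_le Q R c

/-- A point of the median from `P`, close enough to the side `QR`, lies in both triangles. -/
lemma not_disjoint_interior_of_orient_mul_pos (h : 0 < orient P Q R * orient P' Q R) :
    ¬Disjoint (interior (convexHull ℝ {P, Q, R})) (interior (convexHull ℝ {P', Q, R})) := by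
  have hP : orient P Q R ≠ 0 := left_ne_zero_of_mul h.ne'
  have hP' : orient P' Q R ≠ 0 := right_ne_zero_of_mul h.ne'
  obtain ⟨α, β, γ, hα, hsum, hcomb⟩ : ∃ α β γ : ℝ, 0 < α ∧ α + β + γ = 1 ∧
      P = α • P' + β • Q + γ • R := by
    refine ⟨orient P Q R / orient P' Q R, orient P' P R / orient P' Q R,
      orient P' Q P / orient P' Q R, ?_, ?_, ?_⟩
    · rw [← mul_div_mul_right _ _ hP']
      exact div_pos h (mul_self_pos.2 hP')
    · rw [← add_div, ← add_div, orient_add_orient_add_orient, div_self hP']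
    · simp only [div_eq_inv_mul, mul_smul, ← smul_add]
      rw [← orient_smul_eq, inv_smul_smul₀ hP']
  set d : ℝ := (2 + 2 * |β| + 2 * |γ|)⁻¹
  have hd0 : 0 < d := by positivity
  have hd1 : d * (2 + 2 * |β| + 2 * |γ|) = 1 := inv_mul_cancel₀ (by positivity)
  have hdβ := mul_le_mul_of_nonneg_left (neg_abs_le β) hd0.le
  have hdγ := mul_le_mul_of_nonneg_left (neg_abs_le γ) hd0.le
  have hβ : 0 ≤ d * |β| := by positivity
  have hγ : 0 ≤ d * |γ| := by positivity
  refine not_disjoint_iff.2 ⟨d • P + ((1 - d) / 2) • Q + ((1 - d) / 2) • R,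
    (mem_interior_convexHull_triple_iff hP).2 ⟨d, (1 - d) / 2, (1 - d) / 2, hd0, by linarith,
      by linarith, by ring, rfl⟩,
    (mem_interior_convexHull_triple_iff hP').2 ⟨d * α, d * β + (1 - d) / 2, d * γ + (1 - d) / 2,
      by positivity, by linarith, by linarith, by linear_combination d * hsum, ?_⟩⟩
  rw [hcomb]
  module

lemma flux_eq_neg_of_disjoint (hP : orient P Q R ≠ 0) (hP' : orient P' Q R ≠ 0)
    (hdisj : Disjoint (interior (convexHull ℝ {P, Q, R})) (interior (convexHull ℝ {P', Q, R})))
    (c : Pt) : flux c P' Q R = -flux c P Q R := by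
  have hneg : orient P Q R * orient P' Q R < 0 :=
    (not_lt.1 fun h => not_disjoint_interior_of_orient_mul_pos h hdisj).lt_of_ne
      (mul_ne_zero hP hP')
  rcases mul_neg_iff.1 hneg with ⟨h, h'⟩ | ⟨h, h'⟩ <;> simp [flux, h, h']

end Flux

/-! ### Integration over a triangle -/

/-- The coordinates of the plane, as an isomorphism onto `ℝ × ℝ`. -/
def planeCoords : Pt ≃L[ℝ] ℝ × ℝ :=
  (EuclideanSpace.equiv (Fin 2) ℝ).trans (ContinuousLinearEquiv.finTwoArrow ℝ ℝ)

lemma planeCoords_apply (x : Pt) : planeCoords x = (x 0, x 1) := rfl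

lemma measurePreserving_planeCoords : MeasurePreserving planeCoords :=
  (EuclideanSpace.volume_preserving_symm_measurableEquiv_toLp (Fin 2)).trans
    (volume_preserving_finTwoArrow ℝ)

lemma measurableEmbedding_planeCoords : MeasurableEmbedding planeCoords :=
  planeCoords.toHomeomorph.measurableEmbedding

lemma det_planeCoords_comp (L : ℝ × ℝ →L[ℝ] Pt) :
    ((planeCoords : Pt →L[ℝ] ℝ × ℝ).comp L).det = wedge (L (1, 0)) (L (0, 1)) := by
  rw [ContinuousLinearMap.det, ← LinearMap.det_toMatrix (.finTwoProd ℝ), Matrix.det_fin_two]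
  simp only [LinearMap.toMatrix_apply, Module.Basis.finTwoProd_zero, Module.Basis.finTwoProd_one,
    Module.Basis.coe_finTwoProd_repr, Matrix.cons_val_zero, Matrix.cons_val_one,
    Matrix.cons_val_fin_one, ContinuousLinearMap.coe_coe, ContinuousLinearMap.comp_apply,
    ContinuousLinearEquiv.coe_coe, planeCoords_apply, wedge]
  ring

section ChangeOfVariables

variable {E : Type*} [NormedAddCommGroup E] [NormedSpace ℝ E] {Φ : ℝ × ℝ → Pt}
  {Φ' : ℝ × ℝ → ℝ × ℝ →L[ℝ] Pt} {S : Set (ℝ × ℝ)}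

lemma integral_image_eq_integral_abs_wedge_smul (hS : MeasurableSet S)
    (hΦ : ∀ z ∈ S, HasFDerivWithinAt Φ (Φ' z) S z) (hinj : InjOn Φ S) (F : Pt → E) :
    ∫ x in Φ '' S, F x = ∫ z in S, |wedge (Φ' z (1, 0)) (Φ' z (0, 1))| • F (Φ z) := by
  have hpull := measurePreserving_planeCoords.setIntegral_image_emb
    measurableEmbedding_planeCoords (F ∘ planeCoords.symm) (Φ '' S)
  simp only [Function.comp_apply, ContinuousLinearEquiv.symm_apply_apply] at hpull
  rw [← hpull, ← image_comp, integral_image_eq_integral_abs_det_fderiv_smul volume hS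
    (fun z hz => planeCoords.hasFDerivAt.comp_hasFDerivWithinAt z (hΦ z hz))
    (planeCoords.injective.injOn.comp hinj (mapsTo_univ _ _))]
  simp only [det_planeCoords_comp, Function.comp_apply, ContinuousLinearEquiv.symm_apply_apply]

lemma integrableOn_image_iff_integrableOn_abs_wedge_smul (hS : MeasurableSet S)
    (hΦ : ∀ z ∈ S, HasFDerivWithinAt Φ (Φ' z) S z) (hinj : InjOn Φ S) (F : Pt → E) :
    IntegrableOn F (Φ '' S) ↔
      IntegrableOn (fun z => |wedge (Φ' z (1, 0)) (Φ' z (0, 1))| • F (Φ z)) S := by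
  have hpull := measurePreserving_planeCoords.integrableOn_image
    measurableEmbedding_planeCoords (f := F ∘ planeCoords.symm) (s := Φ '' S)
  have hF : (F ∘ planeCoords.symm) ∘ planeCoords = F := by ext x; simp
  rw [hF] at hpull
  rw [← hpull, ← image_comp, integrableOn_image_iff_integrableOn_abs_det_fderiv_smul volume hS
    (fun z hz => planeCoords.hasFDerivAt.comp_hasFDerivWithinAt z (hΦ z hz))
    (planeCoords.injective.injOn.comp hinj (mapsTo_univ _ _))]
  simp only [det_planeCoords_comp, Function.comp_apply, ContinuousLinearEquiv.symm_apply_apply]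

end ChangeOfVariables

/-- The Duffy parametrization of the triangle `PQR`: `z.1` runs along the side `QR` and `z.2` along
the ray from `P`. -/
def duffy (P Q R : Pt) (z : ℝ × ℝ) : Pt := P + z.2 • (Q + z.1 • (R - Q) - P)

section Duffy

variable {P Q R : Pt}

lemma hasFDerivAt_duffy (z : ℝ × ℝ) :
    HasFDerivAt (duffy P Q R) ((ContinuousLinearMap.fst ℝ ℝ ℝ).smulRight (z.2 • (R - Q)) +
      (ContinuousLinearMap.snd ℝ ℝ ℝ).smulRight (Q + z.1 • (R - Q) - P)) z := by
  have hside : HasFDerivAt (fun z : ℝ × ℝ => Q + z.1 • (R - Q) - P)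
      ((ContinuousLinearMap.fst ℝ ℝ ℝ).smulRight (R - Q)) z :=
    ((hasFDerivAt_fst.smul_const (R - Q)).const_add Q).sub_const P
  convert! (hasFDerivAt_snd.smul hside).const_add P using 1
  ext <;> simp

lemma orient_duffy_left (z : ℝ × ℝ) :
    orient P Q (duffy P Q R z) = z.2 * z.1 * orient P Q R := by
  simp only [orient, duffy, wedge, PiLp.add_apply, PiLp.sub_apply, PiLp.smul_apply, smul_eq_mul]
  ring

lemma orient_duffy_right (z : ℝ × ℝ) :
    orient P (duffy P Q R z) R = z.2 * (1 - z.1) * orient P Q R := by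
  simp only [orient, duffy, wedge, PiLp.add_apply, PiLp.sub_apply, PiLp.smul_apply, smul_eq_mul]
  ring

lemma injOn_duffy (h : orient P Q R ≠ 0) : InjOn (duffy P Q R) (Ioo 0 1 ×ˢ Ioo 0 1) := by
  rintro z hz z' - heq
  have hleft : z.2 * z.1 = z'.2 * z'.1 := mul_right_cancel₀ h <| by
    rw [← orient_duffy_left, heq, orient_duffy_left]
  have hright : z.2 * (1 - z.1) = z'.2 * (1 - z'.1) := mul_right_cancel₀ h <| by
    rw [← orient_duffy_right, heq, orient_duffy_right]
  have hsnd : z.2 = z'.2 := by linarith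
  rw [← hsnd] at hleft
  exact Prod.ext (mul_left_cancel₀ hz.2.1.ne' hleft) hsnd

lemma image_duffy (h : orient P Q R ≠ 0) :
    duffy P Q R '' (Ioo 0 1 ×ˢ Ioo 0 1) = interior (convexHull ℝ {P, Q, R}) := by
  ext x
  rw [mem_interior_convexHull_triple_iff h]
  constructor
  · rintro ⟨⟨s, r⟩, ⟨⟨hs0, hs1⟩, hr0, hr1⟩, rfl⟩
    dsimp only at hs0 hs1 hr0 hr1
    refine ⟨1 - r, r * (1 - s), r * s, by linarith, mul_pos hr0 (by linarith), by positivity,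
      by ring, ?_⟩
    simp only [duffy]
    module
  · rintro ⟨a, b, c, ha, hb, hc, hsum, rfl⟩
    have hbc : 0 < b + c := by positivity
    refine ⟨(c / (b + c), b + c), ⟨⟨by positivity, (div_lt_one hbc).2 (by linarith)⟩, hbc,
      show b + c < 1 by linarith⟩, ?_⟩
    obtain rfl : a = 1 - (b + c) := by linarith
    simp only [duffy]
    match_scalars <;> field_simp <;> ring

lemma wedge_fderiv_duffy (z : ℝ × ℝ) :
    wedge (z.2 • (R - Q)) (Q + z.1 • (R - Q) - P) = -(z.2 * orient P Q R) := by
  simp only [orient, wedge, PiLp.add_apply, PiLp.sub_apply, PiLp.smul_apply, smul_eq_mul]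
  ring

lemma duffy_mem_convexHull {s r : ℝ} (hs : s ∈ Icc (0 : ℝ) 1) (hr : r ∈ Icc (0 : ℝ) 1) :
    duffy P Q R (s, r) ∈ convexHull ℝ {P, Q, R} := by
  have hconv := convex_convexHull ℝ {P, Q, R}
  have hsub := subset_convexHull ℝ {P, Q, R}
  exact hconv.add_smul_sub_mem (hsub (by simp))
    (hconv.add_smul_sub_mem (hsub (by simp)) (hsub (by simp)) hs) hr

variable {E : Type*} [NormedAddCommGroup E] [NormedSpace ℝ E] {F : Pt → E}

lemma integral_interior_triangle_eq (h : orient P Q R ≠ 0) (F : Pt → E) :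
    ∫ x in interior (convexHull ℝ {P, Q, R}), F x =
      |orient P Q R| • ∫ z in Ioo (0 : ℝ) 1 ×ˢ Ioo (0 : ℝ) 1, z.2 • F (duffy P Q R z) := by
  have hS : MeasurableSet (Ioo (0 : ℝ) 1 ×ˢ Ioo (0 : ℝ) 1) :=
    measurableSet_Ioo.prod measurableSet_Ioo
  rw [← image_duffy h, integral_image_eq_integral_abs_wedge_smul hS
    (fun z _ => (hasFDerivAt_duffy z).hasFDerivWithinAt) (injOn_duffy h), ← integral_smul]
  refine setIntegral_congr_fun hS fun z hz => ?_
  simp [wedge_fderiv_duffy, abs_mul, abs_of_pos hz.2.1, mul_smul, smul_comm z.2]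

lemma integrableOn_interior_triangle_iff (h : orient P Q R ≠ 0) :
    IntegrableOn F (interior (convexHull ℝ {P, Q, R})) ↔
      IntegrableOn (fun z : ℝ × ℝ => z.2 • F (duffy P Q R z)) (Ioo 0 1 ×ˢ Ioo 0 1) := by
  have hS : MeasurableSet (Ioo (0 : ℝ) 1 ×ˢ Ioo (0 : ℝ) 1) :=
    measurableSet_Ioo.prod measurableSet_Ioo
  rw [← image_duffy h, integrableOn_image_iff_integrableOn_abs_wedge_smul hS
    (fun z _ => (hasFDerivAt_duffy z).hasFDerivWithinAt) (injOn_duffy h)]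
  refine Iff.trans (integrableOn_congr_fun (fun z hz => ?_) hS)
    (integrable_smul_iff (abs_ne_zero.2 h) _)
  simp [wedge_fderiv_duffy, abs_mul, abs_of_pos hz.2.1, mul_smul, smul_comm z.2]

lemma integral_interior_triangle_eq_integral_integral (h : orient P Q R ≠ 0)
    (hF : IntegrableOn F (interior (convexHull ℝ {P, Q, R}))) :
    ∫ x in interior (convexHull ℝ {P, Q, R}), F x =
      |orient P Q R| • ∫ s in Ioo (0 : ℝ) 1, ∫ r in Ioo (0 : ℝ) 1, r • F (duffy P Q R (s, r)) := by
  rw [integral_interior_triangle_eq h, Measure.volume_eq_prod,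
    setIntegral_prod _ ((integrableOn_interior_triangle_iff h).1 hF)]

lemma ae_integrableOn_smul_duffy (h : orient P Q R ≠ 0)
    (hF : IntegrableOn F (interior (convexHull ℝ {P, Q, R}))) :
    ∀ᵐ s ∂volume.restrict (Ioo (0 : ℝ) 1),
      IntegrableOn (fun r => r • F (duffy P Q R (s, r))) (Ioo 0 1) := by
  have hint := (integrableOn_interior_triangle_iff h).1 hF
  rw [IntegrableOn, Measure.volume_eq_prod, ← Measure.prod_restrict] at hint
  exact hint.prod_right_ae

end Duffy

/-! ### The divergence identity -/

/-- `v` is continuous on `s` and differentiable inside `s`, and both `v` and its derivative are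
square integrable there; this is `Triangulation.PwH1` on a single cell. -/
structure H1On {E : Type*} [NormedAddCommGroup E] [NormedSpace ℝ E] [MeasureSpace E]
    (v : E → ℝ) (s : Set E) : Prop where
  continuousOn : ContinuousOn v s
  differentiableOn : DifferentiableOn ℝ v (interior s)
  integrableOn_sq : IntegrableOn (fun x => v x ^ 2) (interior s)
  integrableOn_sq_norm_fderiv : IntegrableOn (fun x => ‖fderiv ℝ v x‖ ^ 2) (interior s)

namespace H1On

variable {E : Type*} [NormedAddCommGroup E] [NormedSpace ℝ E] [MeasureSpace E] [BorelSpace E]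
  {v : E → ℝ} {s : Set E} {p : E} {D θ : ℝ}

lemma memLp_two (h : H1On v s) : MemLp v 2 (volume.restrict (interior s)) :=
  (memLp_two_iff_integrable_sq <| (h.continuousOn.mono interior_subset).aestronglyMeasurable
    isOpen_interior.measurableSet).2 h.integrableOn_sq

lemma abs_integral_two_mul_mul_fderiv_sub_le (h : H1On v s) (hs : s ⊆ Metric.closedBall p D)
    (hθ : 0 < θ) :
    |∫ x in interior s, 2 * v x * fderiv ℝ v x (x - p)| ≤
      θ * (∫ x in interior s, v x ^ 2) + θ⁻¹ * D ^ 2 * ∫ x in interior s, ‖fderiv ℝ v x‖ ^ 2 := by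
  have hv := h.integrableOn_sq.const_mul θ
  have hDv := h.integrableOn_sq_norm_fderiv.const_mul (θ⁻¹ * D ^ 2)
  rw [← integral_const_mul, ← integral_const_mul, ← integral_add hv hDv, ← Real.norm_eq_abs]
  refine norm_integral_le_of_norm_le (hv.add hDv) ?_
  filter_upwards [ae_restrict_mem isOpen_interior.measurableSet] with x hx
  have hderiv : |fderiv ℝ v x (x - p)| ≤ ‖fderiv ℝ v x‖ * D :=
    (fderiv ℝ v x).le_opNorm_of_le (mem_closedBall_iff_norm.1 (hs (interior_subset hx)))
  calc ‖2 * v x * fderiv ℝ v x (x - p)‖ = 2 * |v x| * |fderiv ℝ v x (x - p)| := by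
        rw [Real.norm_eq_abs, abs_mul, abs_mul, abs_two]
    _ ≤ θ * |v x| ^ 2 + θ⁻¹ * |fderiv ℝ v x (x - p)| ^ 2 := two_mul_le_add_mul_sq hθ
    _ ≤ θ * |v x| ^ 2 + θ⁻¹ * (‖fderiv ℝ v x‖ * D) ^ 2 := by gcongr
    _ = θ * v x ^ 2 + θ⁻¹ * D ^ 2 * ‖fderiv ℝ v x‖ ^ 2 := by rw [sq_abs]; ring

variable [FiniteDimensional ℝ E]

lemma memLp_two_fderiv (h : H1On v s) :
    MemLp (fderiv ℝ v) 2 (volume.restrict (interior s)) :=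
  (memLp_two_iff_integrable_sq_norm (measurable_fderiv ℝ v).aestronglyMeasurable).2
    h.integrableOn_sq_norm_fderiv

lemma integrableOn_two_mul_mul_fderiv_sub (h : H1On v s) (hs : Bornology.IsBounded s) (p : E) :
    IntegrableOn (fun x => 2 * v x * fderiv ℝ v x (x - p)) (interior s) := by
  obtain ⟨D, hD⟩ := hs.subset_closedBall p
  have hmeas : AEStronglyMeasurable (fun x => fderiv ℝ v x (x - p))
      (volume.restrict (interior s)) :=
    ContinuousLinearMap.aestronglyMeasurable_comp₂ (ContinuousLinearMap.id ℝ (E →L[ℝ] ℝ))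
      (measurable_fderiv ℝ v).aestronglyMeasurable (by fun_prop)
  have hmemLp : MemLp (fun x => fderiv ℝ v x (x - p)) 2 (volume.restrict (interior s)) := by
    refine h.memLp_two_fderiv.of_le_mul (c := D) hmeas ?_
    filter_upwards [ae_restrict_mem isOpen_interior.measurableSet] with x hx
    rw [mul_comm]
    exact (fderiv ℝ v x).le_opNorm_of_le (mem_closedBall_iff_norm.1 (hD (interior_subset hx)))
  exact (h.memLp_two.const_mul 2).integrable_mul hmemLp

end H1On

/-- The divergence `2 v² + 2 v ∇v · (x - p)` of the planar vector field `v² (x - p)`. -/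
def radialDiv (p : Pt) (v : Pt → ℝ) (x : Pt) : ℝ := 2 * v x ^ 2 + 2 * v x * fderiv ℝ v x (x - p)

/-- The mean value of `f` over the segment from `e.1` to `e.2`. -/
def segAvg (e : Pt × Pt) (f : Pt → ℝ) : ℝ := ∫ s in (0 : ℝ)..1, f (e.1 + s • (e.2 - e.1))

section Cone

variable {v : Pt → ℝ} {s : Set Pt} {w p P Q R : Pt}

lemma H1On.integrableOn_radialDiv (h : H1On v s) (hs : Bornology.IsBounded s) (p : Pt) :
    IntegrableOn (radialDiv p v) (interior s) :=
  (h.integrableOn_sq.const_mul 2).add (h.integrableOn_two_mul_mul_fderiv_sub hs p)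

lemma H1On.integral_radialDiv (h : H1On v s) (hs : Bornology.IsBounded s) (p : Pt) :
    ∫ x in interior s, radialDiv p v x =
      2 * (∫ x in interior s, v x ^ 2) +
        ∫ x in interior s, 2 * v x * fderiv ℝ v x (x - p) := by
  rw [← integral_const_mul, ← integral_add (h.integrableOn_sq.const_mul 2)
    (h.integrableOn_two_mul_mul_fderiv_sub hs p)]
  rfl

lemma hasDerivAt_sq_mul_sq_ray {r : ℝ} (hv : DifferentiableAt ℝ v (p + r • w)) :
    HasDerivAt (fun r : ℝ => r ^ 2 * v (p + r • w) ^ 2) (r * radialDiv p v (p + r • w)) r := by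
  have hray : HasDerivAt (fun r : ℝ => p + r • w) w r := by
    simpa using ((hasDerivAt_id r).smul_const w).const_add p
  have hcomp := hv.hasFDerivAt.comp_hasDerivAt r hray
  convert! (hasDerivAt_pow 2 r).mul (hcomp.pow 2) using 1
  simp only [radialDiv, add_sub_cancel_left, map_smul, smul_eq_mul, Function.comp_apply,
    Pi.pow_apply]
  push_cast
  ring

lemma integral_mul_radialDiv_ray
    (hcont : ContinuousOn (fun r : ℝ => v (p + r • w)) (Icc 0 1))
    (hdiff : ∀ r ∈ Ioo (0 : ℝ) 1, DifferentiableAt ℝ v (p + r • w))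
    (hint : IntegrableOn (fun r : ℝ => r * radialDiv p v (p + r • w)) (Ioo 0 1)) :
    ∫ r in Ioo (0 : ℝ) 1, r * radialDiv p v (p + r • w) = v (p + w) ^ 2 := by
  rw [← integral_Ioc_eq_integral_Ioo, ← intervalIntegral.integral_of_le zero_le_one,
    intervalIntegral.integral_eq_sub_of_hasDerivAt_of_le zero_le_one
      ((continuousOn_id.pow 2).mul (hcont.pow 2))
      (fun r hr => hasDerivAt_sq_mul_sq_ray (hdiff r hr))
      ((intervalIntegrable_iff_integrableOn_Ioo_of_le zero_le_one).2 hint)]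
  simp

lemma isBounded_convexHull_triple {E : Type*} [SeminormedAddCommGroup E] [NormedSpace ℝ E]
    (P Q R : E) : Bornology.IsBounded (convexHull ℝ {P, Q, R}) :=
  isBounded_convexHull.2 (toFinite _).isBounded

/-- Along each ray from `P`, the Duffy coordinates turn the integrand into the derivative of
`r² v²`. -/
lemma H1On.integral_radialDiv_vertex (h : H1On v (convexHull ℝ {P, Q, R}))
    (hPQR : orient P Q R ≠ 0) :
    ∫ x in interior (convexHull ℝ {P, Q, R}), radialDiv P v x =
      |orient P Q R| * segAvg (Q, R) (fun x => v x ^ 2) := by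
  have hint := h.integrableOn_radialDiv (isBounded_convexHull_triple P Q R) P
  rw [integral_interior_triangle_eq_integral_integral hPQR hint, smul_eq_mul, segAvg,
    intervalIntegral.integral_of_le zero_le_one, integral_Ioc_eq_integral_Ioo]
  refine congrArg (|orient P Q R| * ·) (integral_congr_ae ?_)
  filter_upwards [ae_integrableOn_smul_duffy hPQR hint, ae_restrict_mem measurableSet_Ioo]
    with s hs hs01
  have hmaps : MapsTo (fun r : ℝ => P + r • (Q + s • (R - Q) - P)) (Icc 0 1)
      (convexHull ℝ {P, Q, R}) := fun r hr => duffy_mem_convexHull (Ioo_subset_Icc_self hs01) hr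
  have hray := integral_mul_radialDiv_ray (h.continuousOn.comp (by fun_prop) hmaps)
    (fun r hr => h.differentiableOn.differentiableAt (isOpen_interior.mem_nhds ?_)) hs
  · simpa only [smul_eq_mul, duffy, add_sub_cancel] using hray
  · rw [← image_duffy hPQR]
    exact mem_image_of_mem _ (mk_mem_prod hs01 hr)

end Cone

lemma orient_mul_radialDiv (P Q R c : Pt) (v : Pt → ℝ) (x : Pt) :
    orient P Q R * radialDiv c v x = orient c Q R * radialDiv P v x +
      orient c R P * radialDiv Q v x + orient c P Q * radialDiv R v x := by
  rw [orient_rotate P c R, ← orient_rotate c P Q]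
  have hcramer := congrArg (fderiv ℝ v x) (orient_smul_eq P Q R c)
  have hsum := orient_add_orient_add_orient P Q R c
  simp only [map_add, map_smul, smul_eq_mul] at hcramer
  simp only [radialDiv, map_sub]
  linear_combination -(2 * v x ^ 2 + 2 * v x * fderiv ℝ v x x) * hsum - 2 * v x * hcramer

section SegAvg

variable {e : Pt × Pt} {f v w : Pt → ℝ} {δ : ℝ}

lemma segAvg_nonneg (hf : 0 ≤ f) : 0 ≤ segAvg e f :=
  intervalIntegral.integral_nonneg zero_le_one fun _ _ => hf _

lemma intervalIntegrable_comp_segment (hf : ContinuousOn f (segment ℝ e.1 e.2)) :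
    IntervalIntegrable (fun s : ℝ => f (e.1 + s • (e.2 - e.1))) volume 0 1 := by
  refine ContinuousOn.intervalIntegrable ?_
  rw [uIcc_of_le zero_le_one]
  refine hf.comp (by fun_prop) fun s hs => ?_
  rw [segment_eq_image']
  exact mem_image_of_mem _ hs

lemma abs_sq_sub_sq_le (hδ : 0 < δ) (a b : ℝ) :
    |a ^ 2 - b ^ 2| ≤ δ * (a ^ 2 + b ^ 2) + (2 * δ)⁻¹ * (a - b) ^ 2 := by
  have hyoung : 2 * |a + b| * |a - b| ≤ δ * |a + b| ^ 2 + δ⁻¹ * |a - b| ^ 2 :=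
    two_mul_le_add_mul_sq hδ
  have hpar : δ * (a + b) ^ 2 ≤ δ * (2 * (a ^ 2 + b ^ 2)) := by gcongr; exact add_sq_le
  rw [sq_abs, sq_abs] at hyoung
  rw [sq_sub_sq, abs_mul, mul_inv]
  linarith

lemma abs_segAvg_sq_sub_segAvg_sq_le (hv : ContinuousOn v (segment ℝ e.1 e.2))
    (hw : ContinuousOn w (segment ℝ e.1 e.2)) (hδ : 0 < δ) :
    |segAvg e (fun x => v x ^ 2) - segAvg e (fun x => w x ^ 2)| ≤
      δ * (segAvg e (fun x => v x ^ 2) + segAvg e (fun x => w x ^ 2)) +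
        (2 * δ)⁻¹ * segAvg e (fun x => (v x - w x) ^ 2) := by
  have hv2 := intervalIntegrable_comp_segment (f := fun x => v x ^ 2) (hv.pow 2)
  have hw2 := intervalIntegrable_comp_segment (f := fun x => w x ^ 2) (hw.pow 2)
  have hvw := intervalIntegrable_comp_segment (f := fun x => (v x - w x) ^ 2) ((hv.sub hw).pow 2)
  simp only [segAvg]
  rw [← intervalIntegral.integral_sub hv2 hw2, ← intervalIntegral.integral_add hv2 hw2,
    ← intervalIntegral.integral_const_mul, ← intervalIntegral.integral_const_mul,
    ← intervalIntegral.integral_add ((hv2.add hw2).const_mul _) (hvw.const_mul _)]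
  rw [← Real.norm_eq_abs]
  refine intervalIntegral.norm_integral_le_of_norm_le zero_le_one (.of_forall fun s _ => ?_)
    (((hv2.add hw2).const_mul _).add (hvw.const_mul _))
  exact abs_sq_sub_sq_le hδ _ _

end SegAvg

/-! ### Triangles -/

namespace SameEdge

variable {e e' e'' : Pt × Pt}

lemma symm (h : SameEdge e e') : SameEdge e' e := by
  rcases h with rfl | rfl
  exacts [Or.inl rfl, Or.inr rfl]

lemma trans (h : SameEdge e e') (h' : SameEdge e' e'') : SameEdge e e'' := by
  rcases h with rfl | rfl <;> rcases h' with rfl | rfl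
  exacts [Or.inl rfl, Or.inr rfl, Or.inr rfl, Or.inl rfl]

lemma dist_eq (h : SameEdge e e') : dist e'.1 e'.2 = dist e.1 e.2 := by
  rcases h with rfl | rfl
  exacts [rfl, dist_comm _ _]

lemma segment_eq (h : SameEdge e e') : segment ℝ e'.1 e'.2 = segment ℝ e.1 e.2 := by
  rcases h with rfl | rfl
  exacts [rfl, segment_symm ℝ _ _]

lemma segAvg_eq (h : SameEdge e e') (f : Pt → ℝ) : segAvg e' f = segAvg e f := by
  rcases h with rfl | rfl
  · rfl
  · have hrev := intervalIntegral.integral_comp_sub_left (a := 0) (b := 1)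
      (fun s : ℝ => f (e.1 + s • (e.2 - e.1))) 1
    rw [sub_self, sub_zero] at hrev
    rw [segAvg, segAvg, ← hrev]
    congr! 3
    module

end SameEdge

namespace Tri

/-- The vertices of a triangle, indexed cyclically. -/
def vertex (t : Tri) : Fin 3 → Pt := ![t.A, t.B, t.C]

/-- The edge opposite to the vertex `i`. -/
def edge (t : Tri) (i : Fin 3) : Pt × Pt := (t.vertex (i + 1), t.vertex (i + 2))

/-- The length of the edge opposite to the vertex `i`. -/
def len (t : Tri) (i : Fin 3) : ℝ := dist (t.edge i).1 (t.edge i).2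

/-- The flux of `x ↦ x - c` out of the triangle through the edge opposite to the vertex `i`. -/
def edgeFlux (t : Tri) (c : Pt) (i : Fin 3) : ℝ :=
  flux c (t.vertex i) (t.edge i).1 (t.edge i).2

variable {t t' t'' : Tri} {i j k : Fin 3} {c : Pt} {v : Pt → ℝ} {D : ℝ}

lemma edge_zero (t : Tri) : t.edge 0 = (t.B, t.C) := rfl

lemma edge_one (t : Tri) : t.edge 1 = (t.C, t.A) := rfl

lemma edge_two (t : Tri) : t.edge 2 = (t.A, t.B) := rfl

lemma orient_vertex (t : Tri) (i : Fin 3) :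
    orient (t.vertex i) (t.edge i).1 (t.edge i).2 = t.cross := by
  fin_cases i
  exacts [rfl, orient_rotate t.A t.B t.C, (orient_rotate t.B t.C t.A).trans (orient_rotate _ _ _)]

lemma Nondeg.orient_ne_zero (h : t.Nondeg) (i : Fin 3) :
    orient (t.vertex i) (t.edge i).1 (t.edge i).2 ≠ 0 := by
  rwa [orient_vertex]

lemma convexHull_vertex (t : Tri) (i : Fin 3) :
    convexHull ℝ {t.vertex i, (t.edge i).1, (t.edge i).2} = t.closedHull := by
  refine congrArg (convexHull ℝ) ?_
  fin_cases i
  · rfl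
  · exact (congrArg (insert t.B) (pair_comm t.C t.A)).trans (insert_comm _ _ _)
  · exact (insert_comm _ _ _).trans (congrArg (insert t.A) (pair_comm t.C t.B))

lemma vertex_mem_closedHull (t : Tri) (i : Fin 3) : t.vertex i ∈ t.closedHull := by
  rw [← t.convexHull_vertex i]
  exact subset_convexHull ℝ _ (mem_insert _ _)

lemma isBounded_closedHull (t : Tri) : Bornology.IsBounded t.closedHull :=
  isBounded_convexHull_triple t.A t.B t.C

lemma segment_edge_subset (t : Tri) (i : Fin 3) :
    segment ℝ (t.edge i).1 (t.edge i).2 ⊆ t.closedHull :=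
  (convex_convexHull ℝ _).segment_subset
    (t.vertex_mem_closedHull (i + 1)) (t.vertex_mem_closedHull (i + 2))

lemma Nondeg.closedHull_subset_closure_openHull (h : t.Nondeg) :
    t.closedHull ⊆ closure t.openHull := by
  have hcentroid : t.openHull.Nonempty :=
    ⟨_, (mem_interior_convexHull_triple_iff h).2 ⟨1 / 3, 1 / 3, 1 / 3, by norm_num, by norm_num,
      by norm_num, by norm_num, rfl⟩⟩
  rw [openHull, closedHull,
    (convex_convexHull ℝ _).closure_interior_eq_closure_of_nonempty_interior hcentroid]
  exact subset_closure

lemma mem_edgeList_iff {e : Pt × Pt} : e ∈ t.edgeList ↔ ∃ i, t.edge i = e := by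
  simp only [edgeList, List.mem_cons, List.not_mem_nil, or_false, Fin.exists_fin_succ,
    Fin.succ_zero_eq_one, Fin.succ_one_eq_two, IsEmpty.exists_iff, edge_zero, edge_one, edge_two,
    eq_comm (b := e)]
  tauto

lemma sum_map_edgeList (t : Tri) (f : Pt × Pt → ℝ) :
    (t.edgeList.map f).sum = ∑ i, f (t.edge i) := by
  simp only [edgeList, List.map_cons, List.map_nil, List.sum_cons, List.sum_nil,
    Fin.sum_univ_three, edge_zero, edge_one, edge_two]
  ring

lemma Nondeg.len_pos (h : t.Nondeg) (i : Fin 3) : 0 < t.len i := by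
  refine dist_pos.2 fun heq => h.orient_ne_zero i ?_
  rw [heq, orient_self_right]

lemma Nondeg.eq_of_sameEdge (h : t.Nondeg) (hij : SameEdge (t.edge i) (t.edge j)) : i = j := by
  have hlen := fun i => dist_pos.1 (h.len_pos i)
  have h0 := hlen 0
  have h1 := hlen 1
  have h2 := hlen 2
  fin_cases i <;> fin_cases j <;> simp_all [SameEdge, edge, eq_comm]

lemma abs_cross_le (t : Tri) (i : Fin 3) : |t.cross| ≤ t.len (i + 1) * t.len (i + 2) := by
  rw [← t.orient_vertex i]
  have hcyclic : i + 1 + 1 = i + 2 ∧ i + 1 + 2 = i ∧ i + 2 + 1 = i ∧ i + 2 + 2 = i + 1 := by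
    fin_cases i <;> decide
  refine (abs_orient_le _ _ _).trans_eq ?_
  simp only [len, edge, hcyclic]
  rw [mul_comm, dist_comm (t.vertex i) (t.vertex (i + 2))]

lemma shapeReg_eq (t : Tri) :
    t.shapeReg = (∏ i, t.len i) * (∑ i, t.len i) / (2 * |t.cross| ^ 2) := by
  have ha : t.la = t.len 0 := rfl
  have hb : t.lb = t.len 1 := dist_comm _ _
  have hc : t.lc = t.len 2 := rfl
  rw [shapeReg, circumradius, inradius, area, ha, hb, hc, Fin.prod_univ_three, Fin.sum_univ_three]
  generalize |t.cross| = S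
  field_simp
  ring

lemma Nondeg.sq_len_le (h : t.Nondeg) (i : Fin 3) : t.len i ^ 2 ≤ 2 * t.shapeReg * |t.cross| := by
  have hS : 0 < |t.cross| := abs_pos.2 h
  have hprod : ∏ j, t.len j = t.len i * (t.len (i + 1) * t.len (i + 2)) := by
    rw [Fin.prod_univ_three]
    fin_cases i
    exacts [mul_assoc _ _ _, (mul_rotate _ _ _).trans (mul_assoc _ _ _), mul_comm _ _]
  have hsum : t.len i ≤ ∑ j, t.len j :=
    Finset.single_le_sum (fun j _ => (h.len_pos j).le) (Finset.mem_univ i)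
  have hi := (h.len_pos i).le
  calc t.len i ^ 2 = t.len i * |t.cross| * t.len i / |t.cross| := by field_simp
    _ ≤ t.len i * (t.len (i + 1) * t.len (i + 2)) * (∑ j, t.len j) / |t.cross| := by
        gcongr
        exacts [mul_nonneg hi ((abs_nonneg _).trans (t.abs_cross_le i)), t.abs_cross_le i]
    _ = 2 * t.shapeReg * |t.cross| := by rw [shapeReg_eq, hprod]; field_simp

lemma edgeFlux_eq (t : Tri) (c : Pt) (i : Fin 3) :
    t.edgeFlux c i = (SignType.sign t.cross : ℝ) * orient c (t.edge i).1 (t.edge i).2 := by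
  rw [edgeFlux, flux, orient_vertex]

lemma abs_edgeFlux_le (ht : t.closedHull ⊆ Metric.closedBall c D) (i : Fin 3) :
    |t.edgeFlux c i| ≤ D * t.len i := by
  refine (abs_flux_le _ _ _ _).trans (mul_le_mul_of_nonneg_right ?_ dist_nonneg)
  exact Metric.mem_closedBall'.1 (ht (t.vertex_mem_closedHull (i + 1)))

lemma Nondeg.edgeFlux_eq_neg (h : t.Nondeg) (h' : t'.Nondeg)
    (hdisj : Disjoint t.openHull t'.openHull) (hij : SameEdge (t.edge i) (t'.edge j)) (c : Pt) :
    t'.edgeFlux c j = -t.edgeFlux c i := by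
  have hP := h.orient_ne_zero i
  have hP' := h'.orient_ne_zero j
  rw [openHull, openHull, ← t.convexHull_vertex i, ← t'.convexHull_vertex j] at hdisj
  rw [edgeFlux, edgeFlux]
  rcases hij with heq | heq
  · rw [heq] at hP' hdisj ⊢
    exact flux_eq_neg_of_disjoint hP hP' hdisj c
  · rw [heq] at hP' hdisj ⊢
    rw [orient_swap, neg_ne_zero] at hP'
    rw [pair_comm (t.edge i).2] at hdisj
    rw [flux_swap]
    exact flux_eq_neg_of_disjoint hP hP' hdisj c

/-- Otherwise the fluxes of the three triangles through the common edge would be pairwise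
opposite. -/
lemma Nondeg.not_disjoint_of_sameEdge (h : t.Nondeg) (h' : t'.Nondeg) (h'' : t''.Nondeg)
    (hij : SameEdge (t.edge i) (t'.edge j)) (hik : SameEdge (t.edge i) (t''.edge k))
    (hdisj' : Disjoint t.openHull t'.openHull) (hdisj'' : Disjoint t.openHull t''.openHull) :
    ¬Disjoint t'.openHull t''.openHull := by
  intro hdisj
  have h1 := h.edgeFlux_eq_neg h' hdisj' hij (t.vertex i)
  have h2 := h.edgeFlux_eq_neg h'' hdisj'' hik (t.vertex i)
  have h3 := h'.edgeFlux_eq_neg h'' hdisj (hij.symm.trans hik) (t.vertex i)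
  have hself : t.edgeFlux (t.vertex i) i = |t.cross| := by
    rw [edgeFlux, flux_self, orient_vertex]
  have hpos : 0 < |t.cross| := abs_pos.2 h
  linarith

lemma integral_radialDiv_vertex (ht : t.Nondeg) (hv : H1On v t.closedHull) (i : Fin 3) :
    ∫ x in t.openHull, radialDiv (t.vertex i) v x =
      |t.cross| * segAvg (t.edge i) (fun x => v x ^ 2) := by
  rw [← t.convexHull_vertex i] at hv
  rw [openHull, ← t.convexHull_vertex i, hv.integral_radialDiv_vertex (ht.orient_ne_zero i),
    orient_vertex]

/-- The divergence theorem for `v² (x - c)`: express `c` in barycentric coordinates and combine the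
identities for the three vertices. -/
lemma integral_radialDiv (ht : t.Nondeg) (hv : H1On v t.closedHull) (c : Pt) :
    ∫ x in t.openHull, radialDiv c v x =
      ∑ i, t.edgeFlux c i * segAvg (t.edge i) (fun x => v x ^ 2) := by
  have hbary : ∀ x, t.cross * radialDiv c v x =
      ∑ i, orient c (t.edge i).1 (t.edge i).2 * radialDiv (t.vertex i) v x := by
    intro x
    rw [Fin.sum_univ_three, ← t.orient_vertex 0]
    exact orient_mul_radialDiv _ _ _ c v x
  refine mul_left_cancel₀ (show t.cross ≠ 0 from ht) ?_
  simp only [← integral_const_mul, hbary, Finset.mul_sum, edgeFlux_eq]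
  rw [openHull, integral_finsetSum _ fun i _ =>
    (hv.integrableOn_radialDiv t.isBounded_closedHull _).const_mul _]
  refine Finset.sum_congr rfl fun i _ => ?_
  rw [integral_const_mul, ← openHull, integral_radialDiv_vertex ht hv, ← self_mul_sign]
  ring

lemma integral_sq_le (ht : t.Nondeg) (hv : H1On v t.closedHull)
    (hball : t.closedHull ⊆ Metric.closedBall c D) :
    3 / 2 * (∫ x in t.openHull, v x ^ 2) ≤
      (∑ i, t.edgeFlux c i * segAvg (t.edge i) (fun x => v x ^ 2)) +
        2 * D ^ 2 * ∫ x in t.openHull, ‖fderiv ℝ v x‖ ^ 2 := by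
  have hdiv := hv.integral_radialDiv t.isBounded_closedHull c
  have hyoung := hv.abs_integral_two_mul_mul_fderiv_sub_le hball one_half_pos
  have hneg := neg_abs_le (∫ x in interior t.closedHull, 2 * v x * fderiv ℝ v x (x - c))
  rw [← integral_radialDiv ht hv, openHull]
  linarith

lemma sq_len_mul_segAvg_le (ht : t.Nondeg) (hv : H1On v t.closedHull)
    (hball : t.closedHull ⊆ Metric.closedBall (t.vertex i) D) :
    t.len i ^ 2 * segAvg (t.edge i) (fun x => v x ^ 2) ≤
      2 * t.shapeReg * (3 * (∫ x in t.openHull, v x ^ 2) +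
        D ^ 2 * ∫ x in t.openHull, ‖fderiv ℝ v x‖ ^ 2) := by
  have hdiv := hv.integral_radialDiv t.isBounded_closedHull (t.vertex i)
  have hyoung := hv.abs_integral_two_mul_mul_fderiv_sub_le hball one_pos
  have hle := le_abs_self (∫ x in interior t.closedHull, 2 * v x * fderiv ℝ v x (x - t.vertex i))
  have hreg : 0 ≤ t.shapeReg := by rw [shapeReg_eq]; simp only [len]; positivity
  have havg : 0 ≤ segAvg (t.edge i) (fun x => v x ^ 2) := segAvg_nonneg fun _ => sq_nonneg _
  calc t.len i ^ 2 * segAvg (t.edge i) (fun x => v x ^ 2)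
      ≤ 2 * t.shapeReg * |t.cross| * segAvg (t.edge i) (fun x => v x ^ 2) := by
        gcongr; exact ht.sq_len_le i
    _ = 2 * t.shapeReg * ∫ x in t.openHull, radialDiv (t.vertex i) v x := by
        rw [integral_radialDiv_vertex ht hv]; ring
    _ ≤ _ := by
        rw [openHull]; gcongr; linarith

end Tri

/-! ### Triangulations -/

namespace Triangulation

variable {Ω : Set Pt} {T : Triangulation Ω} {u : Tri → Pt → ℝ} {p q q' : Tri × Fin 3}
  {c : Pt} {t : Tri} {M K ε : ℝ}

/-- The sides of the triangles of `T`, each encoded by a triangle and the index of the opposite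
vertex; an interior edge of the triangulation gives rise to two sides. -/
def sides (T : Triangulation Ω) : Finset (Tri × Fin 3) := T.tris ×ˢ Finset.univ

/-- The sides contained in the boundary of the domain. -/
def boundarySides (T : Triangulation Ω) : Finset (Tri × Fin 3) :=
  T.sides.filter fun p => segment ℝ (p.1.edge p.2).1 (p.1.edge p.2).2 ⊆ frontier Ω

/-- The sides not contained in the boundary of the domain. -/
def interiorSides (T : Triangulation Ω) : Finset (Tri × Fin 3) :=
  T.sides.filter fun p => ¬segment ℝ (p.1.edge p.2).1 (p.1.edge p.2).2 ⊆ frontier Ω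

/-- Two sides of different triangles are adjacent if they are the same segment. -/
def Adjacent (p q : Tri × Fin 3) : Prop :=
  p.1 ≠ q.1 ∧ SameEdge (p.1.edge p.2) (q.1.edge q.2)

/-- The side adjacent to `p` in `T`; the value is `p` itself if there is none. -/
def mate (T : Triangulation Ω) (p : Tri × Fin 3) : Tri × Fin 3 :=
  if h : ∃ q ∈ T.sides, Adjacent p q then h.choose else p

/-- The mean over the side `p` of the square of the trace of `u` from the triangle `p.1`. -/
def traceSq (u : Tri → Pt → ℝ) (p : Tri × Fin 3) : ℝ :=
  segAvg (p.1.edge p.2) fun x => u p.1 x ^ 2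

/-- The mean over the side `p` of the square of the jump from the triangle `p.1` to the
triangle `t`. -/
def meanJumpSq (u : Tri → Pt → ℝ) (p : Tri × Fin 3) (t : Tri) : ℝ :=
  segAvg (p.1.edge p.2) fun x => (u p.1 x - u t x) ^ 2

lemma mem_sides : p ∈ T.sides ↔ p.1 ∈ T.tris := by
  simp [sides]

lemma nondeg_of_mem_sides (hp : p ∈ T.sides) : p.1.Nondeg := T.nondeg _ (mem_sides.1 hp)

lemma disjoint_openHull (hp : p ∈ T.sides) (hq : q ∈ T.sides) (hpq : Adjacent p q) :
    Disjoint p.1.openHull q.1.openHull :=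
  disjoint_iff_inter_eq_empty.2 (T.disj _ (mem_sides.1 hp) _ (mem_sides.1 hq) hpq.1)

lemma sum_sides (T : Triangulation Ω) (f : Tri × Fin 3 → ℝ) :
    ∑ p ∈ T.sides, f p = ∑ t ∈ T.tris, ∑ i, f (t, i) :=
  Finset.sum_product _ _ _

lemma sum_boundarySides_add_sum_interiorSides (T : Triangulation Ω) (f : Tri × Fin 3 → ℝ) :
    ∑ p ∈ T.boundarySides, f p + ∑ p ∈ T.interiorSides, f p = ∑ p ∈ T.sides, f p :=
  Finset.sum_filter_add_sum_filter_not _ _ _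

namespace Adjacent

lemma symm (h : Adjacent p q) : Adjacent q p := ⟨h.1.symm, h.2.symm⟩

lemma eq_of_mem_sides (h : Adjacent p q) (h' : Adjacent p q') (hp : p ∈ T.sides)
    (hq : q ∈ T.sides) (hq' : q' ∈ T.sides) : q = q' := by
  have htri : q.1 = q'.1 := by
    by_contra hne
    exact (nondeg_of_mem_sides hp).not_disjoint_of_sameEdge (nondeg_of_mem_sides hq)
      (nondeg_of_mem_sides hq') h.2 h'.2 (disjoint_openHull hp hq h) (disjoint_openHull hp hq' h')
      (disjoint_openHull hq hq' ⟨hne, h.2.symm.trans h'.2⟩)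
  refine Prod.ext htri ((nondeg_of_mem_sides hq).eq_of_sameEdge ?_)
  have hsame := h.2.symm.trans h'.2
  rwa [← htri] at hsame

end Adjacent

lemma exists_adjacent (hp : p ∈ T.interiorSides) : ∃ q ∈ T.sides, Adjacent p q := by
  obtain ⟨hp, hint⟩ := Finset.mem_filter.1 hp
  obtain ⟨t, ht, hne, e, he, hsame⟩ :=
    (T.conforming _ (mem_sides.1 hp) _ (Tri.mem_edgeList_iff.2 ⟨p.2, rfl⟩)).resolve_left hint
  obtain ⟨j, rfl⟩ := Tri.mem_edgeList_iff.1 he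
  exact ⟨(t, j), mem_sides.2 ht, hne.symm, hsame⟩

lemma mem_sides_of_mem_interiorSides (hp : p ∈ T.interiorSides) : p ∈ T.sides :=
  Finset.mem_of_mem_filter p hp

lemma adjacent_mate (hp : p ∈ T.interiorSides) : Adjacent p (T.mate p) := by
  rw [mate, dif_pos (exists_adjacent hp)]
  exact (exists_adjacent hp).choose_spec.2

lemma mate_mem_interiorSides (hp : p ∈ T.interiorSides) : T.mate p ∈ T.interiorSides := by
  have hadj := adjacent_mate hp
  refine Finset.mem_filter.2 ⟨?_, ?_⟩
  · rw [mate, dif_pos (exists_adjacent hp)]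
    exact (exists_adjacent hp).choose_spec.1
  · rw [hadj.2.segment_eq]
    exact (Finset.mem_filter.1 hp).2

lemma mate_mate (hp : p ∈ T.interiorSides) : T.mate (T.mate p) = p := by
  have hmate := mate_mem_interiorSides hp
  exact (adjacent_mate hmate).eq_of_mem_sides (adjacent_mate hp).symm
    (mem_sides_of_mem_interiorSides hmate)
    (mem_sides_of_mem_interiorSides (mate_mem_interiorSides hmate))
    (mem_sides_of_mem_interiorSides hp)

lemma sum_mate (T : Triangulation Ω) (f : Tri × Fin 3 → ℝ) :
    ∑ p ∈ T.interiorSides, f (T.mate p) = ∑ p ∈ T.interiorSides, f p :=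
  Finset.sum_nbij' T.mate T.mate (fun _ => mate_mem_interiorSides)
    (fun _ => mate_mem_interiorSides) (fun _ => mate_mate) (fun _ => mate_mate) fun _ _ => rfl

lemma closedHull_subset_closedBall (hΩ : Ω ⊆ Metric.closedBall c M) (ht : t ∈ T.tris) :
    t.closedHull ⊆ Metric.closedBall c M := by
  refine (T.nondeg t ht).closedHull_subset_closure_openHull.trans ?_
  refine closure_minimal (Subset.trans ?_ hΩ) Metric.isClosed_closedBall
  rw [T.cover]
  exact interior_mono (subset_biUnion_of_mem (u := Tri.closedHull) ht)

lemma PwH1.h1On (hu : T.PwH1 u) (ht : t ∈ T.tris) : H1On (u t) t.closedHull :=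
  let ⟨hcont, hdiff, hsq, hgrad⟩ := hu t ht
  ⟨hcont, hdiff, hsq, hgrad⟩

lemma traceSq_nonneg (u : Tri → Pt → ℝ) (p : Tri × Fin 3) : 0 ≤ traceSq u p :=
  segAvg_nonneg fun _ => sq_nonneg _

lemma meanJumpSq_nonneg (u : Tri → Pt → ℝ) (p : Tri × Fin 3) (t : Tri) : 0 ≤ meanJumpSq u p t :=
  segAvg_nonneg fun _ => sq_nonneg _

lemma bdrySq_eq_sum (T : Triangulation Ω) (u : Tri → Pt → ℝ) :
    T.bdrySq u = ∑ p ∈ T.boundarySides, p.1.len p.2 * traceSq u p := by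
  rw [boundarySides, Finset.sum_filter, sum_sides]
  exact Finset.sum_congr rfl fun t _ => t.sum_map_edgeList _

lemma edgeJump_eq_sum (ht : t.Nondeg) (u : Tri → Pt → ℝ) (t' : Tri) :
    edgeJump u t t' =
      ∑ i, if ∃ j, SameEdge (t.edge i) (t'.edge j) then meanJumpSq u (t, i) t' else 0 := by
  refine (t.sum_map_edgeList _).trans (Finset.sum_congr rfl fun i _ => ?_)
  refine if_congr (by simp only [Tri.mem_edgeList_iff, exists_exists_eq_and]) ?_ rfl
  exact inv_mul_cancel_left₀ (ht.len_pos i).ne' _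

lemma two_mul_jumpSq_eq_sum (T : Triangulation Ω) (u : Tri → Pt → ℝ) :
    2 * T.jumpSq u = ∑ p ∈ T.sides, ∑ t ∈ T.tris,
      if p.1 ≠ t ∧ ∃ j, SameEdge (p.1.edge p.2) (t.edge j) then meanJumpSq u p t else 0 := by
  rw [jumpSq, one_div, mul_inv_cancel_left₀ two_ne_zero, sum_sides]
  refine Finset.sum_congr rfl fun t ht => ?_
  rw [Finset.sum_comm]
  refine Finset.sum_congr rfl fun t' _ => ?_
  simp only [ite_and, edgeJump_eq_sum (T.nondeg t ht)]
  split_ifs <;> simp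

lemma bdrySq_nonneg (T : Triangulation Ω) (u : Tri → Pt → ℝ) : 0 ≤ T.bdrySq u := by
  rw [bdrySq_eq_sum]
  exact Finset.sum_nonneg fun p _ => mul_nonneg dist_nonneg (traceSq_nonneg u p)

lemma gradSq_nonneg (T : Triangulation Ω) (u : Tri → Pt → ℝ) : 0 ≤ T.gradSq u :=
  Finset.sum_nonneg fun _ _ => integral_nonneg fun _ => sq_nonneg _

lemma sum_meanJumpSq_mate_le (T : Triangulation Ω) (u : Tri → Pt → ℝ) :
    ∑ p ∈ T.interiorSides, meanJumpSq u p (T.mate p).1 ≤ 2 * T.jumpSq u := by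
  have hnonneg : ∀ p t, 0 ≤ if p.1 ≠ t ∧ ∃ j, SameEdge (p.1.edge p.2) (t.edge j)
      then meanJumpSq u p t else 0 := by
    intro p t
    split_ifs
    exacts [meanJumpSq_nonneg u p t, le_rfl]
  rw [two_mul_jumpSq_eq_sum]
  refine (Finset.sum_le_sum fun p hp => ?_).trans (Finset.sum_le_sum_of_subset_of_nonneg
    (Finset.filter_subset _ _) fun p _ _ => Finset.sum_nonneg fun t _ => hnonneg p t)
  have hadj := adjacent_mate hp
  refine Eq.trans_le ?_ (Finset.single_le_sum (fun t _ => hnonneg p t)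
    (mem_sides.1 (mem_sides_of_mem_interiorSides (mate_mem_interiorSides hp))))
  rw [if_pos ⟨hadj.1, _, hadj.2⟩]

lemma jumpSq_nonneg (T : Triangulation Ω) (u : Tri → Pt → ℝ) : 0 ≤ T.jumpSq u :=
  nonneg_of_mul_nonneg_right ((Finset.sum_nonneg fun p _ => meanJumpSq_nonneg u p _).trans
    (T.sum_meanJumpSq_mate_le u)) two_pos

lemma edgeFlux_mul_traceSq_sub_le (hu : T.PwH1 u) (hΩ : Ω ⊆ Metric.closedBall c M)
    (hp : p ∈ T.sides) (hq : q ∈ T.sides) (hpq : Adjacent p q) (hε : 0 < ε) :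
    p.1.edgeFlux c p.2 * (traceSq u p - traceSq u q) ≤
      M * (ε * (p.1.len p.2 ^ 2 * traceSq u p + q.1.len q.2 ^ 2 * traceSq u q) +
        (2 * ε)⁻¹ * meanJumpSq u p q.1) := by
  have hlen := (nondeg_of_mem_sides hp).len_pos p.2
  have hcont := (hu.h1On (mem_sides.1 hp)).continuousOn.mono (p.1.segment_edge_subset p.2)
  have hcont' := (hu.h1On (mem_sides.1 hq)).continuousOn.mono (q.1.segment_edge_subset q.2)
  rw [hpq.2.segment_eq] at hcont'
  have hflux := Tri.abs_edgeFlux_le (closedHull_subset_closedBall hΩ (mem_sides.1 hp)) p.2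
  have htrace := abs_segAvg_sq_sub_segAvg_sq_le hcont hcont' (mul_pos hε hlen)
  have hq_len : q.1.len q.2 = p.1.len p.2 := hpq.2.dist_eq
  have hq_trace : traceSq u q = segAvg (p.1.edge p.2) fun x => u q.1 x ^ 2 := hpq.2.segAvg_eq _
  rw [← hq_trace] at htrace
  calc p.1.edgeFlux c p.2 * (traceSq u p - traceSq u q)
      ≤ |p.1.edgeFlux c p.2| * |traceSq u p - traceSq u q| :=
        (le_abs_self _).trans_eq (abs_mul _ _)
    _ ≤ M * p.1.len p.2 * (ε * p.1.len p.2 * (traceSq u p + traceSq u q) +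
          (2 * (ε * p.1.len p.2))⁻¹ * meanJumpSq u p q.1) :=
        mul_le_mul hflux htrace (abs_nonneg _) ((abs_nonneg _).trans hflux)
    _ = _ := by rw [hq_len]; field_simp

/-- The two sides of an interior edge carry opposite fluxes, so only the difference of the two
traces contributes. -/
lemma sum_interiorSides_edgeFlux_mul_traceSq_le (hu : T.PwH1 u)
    (hΩ : Ω ⊆ Metric.closedBall c M) (hM : 0 ≤ M) (hε : 0 < ε) :
    ∑ p ∈ T.interiorSides, p.1.edgeFlux c p.2 * traceSq u p ≤
      M * (ε * ∑ p ∈ T.sides, p.1.len p.2 ^ 2 * traceSq u p + (2 * ε)⁻¹ * T.jumpSq u) := by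
  have hsymm : 2 * ∑ p ∈ T.interiorSides, p.1.edgeFlux c p.2 * traceSq u p =
      ∑ p ∈ T.interiorSides, p.1.edgeFlux c p.2 * (traceSq u p - traceSq u (T.mate p)) := by
    rw [two_mul]
    nth_rewrite 2 [← sum_mate]
    rw [← Finset.sum_add_distrib]
    refine Finset.sum_congr rfl fun p hp => ?_
    have hps := mem_sides_of_mem_interiorSides hp
    have hms := mem_sides_of_mem_interiorSides (mate_mem_interiorSides hp)
    have hadj := adjacent_mate hp
    rw [(nondeg_of_mem_sides hps).edgeFlux_eq_neg (nondeg_of_mem_sides hms)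
      (disjoint_openHull hps hms hadj) hadj.2]
    ring
  have hsum := Finset.sum_le_sum fun p hp => edgeFlux_mul_traceSq_sub_le hu hΩ
    (mem_sides_of_mem_interiorSides hp)
    (mem_sides_of_mem_interiorSides (mate_mem_interiorSides hp)) (adjacent_mate hp) hε
  have hsub : ∑ p ∈ T.interiorSides, p.1.len p.2 ^ 2 * traceSq u p ≤
      ∑ p ∈ T.sides, p.1.len p.2 ^ 2 * traceSq u p :=
    Finset.sum_le_sum_of_subset_of_nonneg (Finset.filter_subset _ _) fun p _ _ =>
      mul_nonneg (sq_nonneg _) (traceSq_nonneg u p)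
  rw [← Finset.mul_sum, Finset.sum_add_distrib, ← Finset.mul_sum, ← Finset.mul_sum,
    Finset.sum_add_distrib, sum_mate T fun p => p.1.len p.2 ^ 2 * traceSq u p] at hsum
  suffices 2 * ∑ p ∈ T.interiorSides, p.1.edgeFlux c p.2 * traceSq u p ≤
      M * (ε * (2 * ∑ p ∈ T.sides, p.1.len p.2 ^ 2 * traceSq u p) +
        (2 * ε)⁻¹ * (2 * T.jumpSq u)) by linarith
  rw [hsymm]
  refine hsum.trans ?_
  gcongr
  exacts [by linarith, sum_meanJumpSq_mate_le T u]

lemma sum_boundarySides_edgeFlux_mul_traceSq_le (hΩ : Ω ⊆ Metric.closedBall c M)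
    (u : Tri → Pt → ℝ) :
    ∑ p ∈ T.boundarySides, p.1.edgeFlux c p.2 * traceSq u p ≤ M * T.bdrySq u := by
  rw [bdrySq_eq_sum, Finset.mul_sum]
  refine Finset.sum_le_sum fun p hp => ?_
  have hp := mem_sides.1 (Finset.mem_of_mem_filter p hp)
  rw [← mul_assoc]
  gcongr
  exacts [traceSq_nonneg u p,
    (le_abs_self _).trans (Tri.abs_edgeFlux_le (closedHull_subset_closedBall hΩ hp) p.2)]

lemma sqL2_le_sum_edgeFlux_mul_traceSq (hu : T.PwH1 u) (hΩ : Ω ⊆ Metric.closedBall c M) :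
    3 / 2 * T.sqL2 u ≤
      ∑ p ∈ T.sides, p.1.edgeFlux c p.2 * traceSq u p + 2 * M ^ 2 * T.gradSq u := by
  rw [sqL2, gradSq, sum_sides, Finset.mul_sum, Finset.mul_sum, ← Finset.sum_add_distrib]
  exact Finset.sum_le_sum fun t ht => Tri.integral_sq_le (T.nondeg t ht) (hu.h1On ht)
    (closedHull_subset_closedBall hΩ ht)

lemma sum_sq_len_mul_traceSq_le (hu : T.PwH1 u) (hK : T.ShapeRegular K)
    (hΩ : Ω ⊆ Metric.closedBall c M) :
    ∑ p ∈ T.sides, p.1.len p.2 ^ 2 * traceSq u p ≤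
      6 * K * (3 * T.sqL2 u + (2 * M) ^ 2 * T.gradSq u) := by
  rw [sum_sides, sqL2, gradSq, Finset.mul_sum, Finset.mul_sum, ← Finset.sum_add_distrib,
    Finset.mul_sum]
  refine Finset.sum_le_sum fun t ht => ?_
  have hside : ∀ i, t.len i ^ 2 * traceSq u (t, i) ≤
      2 * K * (3 * (∫ x in t.openHull, u t x ^ 2) +
        (2 * M) ^ 2 * ∫ x in t.openHull, ‖fderiv ℝ (u t) x‖ ^ 2) := by
    intro i
    have hball := closedHull_subset_closedBall hΩ ht
    have hvertex := Metric.mem_closedBall'.1 (hball (t.vertex_mem_closedHull i))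
    refine (Tri.sq_len_mul_segAvg_le (T.nondeg t ht) (hu.h1On ht) (hball.trans
      (Metric.closedBall_subset_closedBall' (by linarith : M + _ ≤ 2 * M)))).trans ?_
    gcongr
    exact hK t ht
  refine (Finset.sum_le_sum fun i _ => hside i).trans_eq ?_
  simp only [Finset.sum_const, Finset.card_univ, Fintype.card_fin, nsmul_eq_mul]
  ring

/-- The parameter `ε = (36 M K)⁻¹` makes the trace terms contribute `1 / 2 * T.sqL2 u`. -/
lemma sqL2_le_of_subset_closedBall (hu : T.PwH1 u) (hT : T.ShapeRegular K)
    (hΩ : Ω ⊆ Metric.closedBall c M) (hM : 0 < M) (hK : 0 < K) :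
    T.sqL2 u ≤ 8 / 3 * M ^ 2 * T.gradSq u + 18 * M ^ 2 * K * T.jumpSq u + M * T.bdrySq u := by
  have hsides := sqL2_le_sum_edgeFlux_mul_traceSq hu hΩ
  rw [← sum_boundarySides_add_sum_interiorSides] at hsides
  have hbdry := sum_boundarySides_edgeFlux_mul_traceSq_le (T := T) hΩ u
  have hint : ∑ p ∈ T.interiorSides, p.1.edgeFlux c p.2 * traceSq u p ≤
      1 / 2 * T.sqL2 u + 2 / 3 * M ^ 2 * T.gradSq u + 18 * M ^ 2 * K * T.jumpSq u :=
    calc _ ≤ M * ((36 * M * K)⁻¹ * ∑ p ∈ T.sides, p.1.len p.2 ^ 2 * traceSq u p +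
            (2 * (36 * M * K)⁻¹)⁻¹ * T.jumpSq u) :=
          sum_interiorSides_edgeFlux_mul_traceSq_le hu hΩ hM.le (by positivity)
      _ ≤ M * ((36 * M * K)⁻¹ * (6 * K * (3 * T.sqL2 u + (2 * M) ^ 2 * T.gradSq u)) +
            (2 * (36 * M * K)⁻¹)⁻¹ * T.jumpSq u) := by
          gcongr; exact sum_sq_len_mul_traceSq_le hu hT hΩ
      _ = _ := by field_simp; ring
  linarith

end Triangulation

theorem poincare_friedrichs_boundary_general (M K : ℝ) :
    ∃ C : ℝ, 0 < C ∧ ∀ (Ω : Set Pt) (c : Pt), Ω ⊆ Metric.closedBall c M →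
      ∀ T : Triangulation Ω, T.ShapeRegular K → ∀ u : Tri → Pt → ℝ, T.PwH1 u →
        T.sqL2 u ≤ C * (T.gradSq u + T.jumpSq u + T.bdrySq u) := by
  have hM : 0 < max M 1 := lt_max_of_lt_right one_pos
  have hK : 0 < max K 1 := lt_max_of_lt_right one_pos
  have ha : 0 < 8 / 3 * max M 1 ^ 2 := by positivity
  have hb : 0 < 18 * max M 1 ^ 2 * max K 1 := by positivity
  refine ⟨8 / 3 * max M 1 ^ 2 + 18 * max M 1 ^ 2 * max K 1 + max M 1, by positivity,
    fun Ω c hΩ T hT u hu => ?_⟩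
  have hball := hΩ.trans (Metric.closedBall_subset_closedBall (le_max_left M 1))
  have hreg : T.ShapeRegular (max K 1) := fun t ht => (hT t ht).trans (le_max_left K 1)
  refine (Triangulation.sqL2_le_of_subset_closedBall hu hreg hball hM hK).trans ?_
  rw [mul_add, mul_add]
  exact add_le_add (add_le_add
    (mul_le_mul_of_nonneg_right (by linarith) (T.gradSq_nonneg u))
    (mul_le_mul_of_nonneg_right (by linarith) (T.jumpSq_nonneg u)))
    (mul_le_mul_of_nonneg_right (by linarith) (T.bdrySq_nonneg u))

/-- Poincaré–Friedrichs inequality with boundary term: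
`‖u‖²_{L²(Ω)} ≤ C (∫_{Ω_h}|∇u|² + Σ_{e∈ℰ⁰_h}|e|⁻¹∫_e[u]² + ∫_{∂Ω}u²)` for all
`u ∈ H¹_h`, with `C` depending only on `Ω` and the shape regularity constant `𝒦`. -/
theorem poincare_friedrichs_boundary (Ω : Set Pt) (hΩ : IsPolygon Ω) (K : ℝ) :
    ∃ C : ℝ, 0 < C ∧ ∀ T : Triangulation Ω, T.ShapeRegular K →
      ∀ u : Tri → Pt → ℝ, T.PwH1 u →
        T.sqL2 u ≤ C * (T.gradSq u + T.jumpSq u + T.bdrySq u) := by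
  obtain ⟨M, hM⟩ := hΩ.2.1.subset_closedBall 0
  obtain ⟨C, hC, hle⟩ := poincare_friedrichs_boundary_general M K
  exact ⟨C, hC, hle Ω 0 hM⟩
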